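/- For I ⊆ [n-2], the number of n-cycles π with D(π) ∩ [n-2] = I equals β_{n-1}(I), the number of permutations of [n-1] with descent set exactly I. Equivalently, β^cyc_n(I) + β^cyc_n(I ∪ {n-1}) = β_{n-1}(I). -/

import Mathlib

/-!
Write `n = m + 1`. A Möbius inversion over the subsets of `[m - 1]` (`card_eq_of_card_subset`)
reduces the claim to `card_cycles_eq_alphaP`: the `n`-cycles with descents in `I ∪ {m}` are as many
as the permutations of `[m]` with descents in `I`. Let `b` be the block word of `I`, the weakly
increasing word of length `m` that jumps exactly at the elements of `I`. A permutation has its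
descents in `I` iff it is increasing on each block (`descSet_subset_iff`). Both families are
equinumerous with the rearrangements of `b`.

For permutations `σ` of `[m]`, the rearrangement is `b ∘ σ⁻¹`, and `σ⁻¹` is recovered by stable
sorting. An `n`-cycle is `(n, τ 1, …, τ m)` for a unique permutation `τ` of `[m]`, and its
rearrangement is `b ∘ τ`. If the cycle increases on blocks, two elements of one block compare as
their successors do; following the cycle, `τ` ranks the positions of the word `b ∘ τ` by the
lexicographic order of its suffixes, each continued by the letter `∞` (which stands for the block
`{n}`). Conversely the suffix order yields a cycle that increases on blocks (`ranks_suffix_iff`).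
This is the Gessel–Reutenauer correspondence between cycles and primitive necklaces, in the case
where one letter occurs exactly once.

Stable sorting and suffix sorting both rank the positions of a word by an injective key that refines
its letters, and `card_ranking` shows that for any such key the permutations ranking their own
word correspond to the rearrangements of `b`.
-/

open Finset

/-- The value `π(i)` of a permutation of `[n]`, in 1-based position notation. -/
def permVal {n : ℕ} (π : Equiv.Perm (Fin n)) (i : ℕ) : ℕ :=
  if h : i - 1 < n then ((π ⟨i - 1, h⟩ : Fin n) : ℕ) else 0

/-- The descent set `D(π) = {i ∈ [n-1] : π(i) > π(i+1)}` (1-based). -/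
def descSet {n : ℕ} (π : Equiv.Perm (Fin n)) : Finset ℕ :=
  (Finset.Ioo 0 n).filter fun i => permVal π (i + 1) < permVal π i

/-- `π` is an `n`-cycle: a permutation of `[n]` consisting of a single cycle of length `n`. -/
def IsFullCycle {n : ℕ} (π : Equiv.Perm (Fin n)) : Prop :=
  ∀ x y : Fin n, ∃ k : ℕ, (π ^ k) x = y

/-- `α_n(I)`: number of permutations of `[n]` with descent set contained in `I`. -/
noncomputable def alphaP (n : ℕ) (I : Finset ℕ) : ℕ :=
  Nat.card {π : Equiv.Perm (Fin n) // descSet π ⊆ I}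

/-- `α^cyc_n(I)`: number of `n`-cycles with descent set contained in `I`. -/
noncomputable def alphaC (n : ℕ) (I : Finset ℕ) : ℕ :=
  Nat.card {π : Equiv.Perm (Fin n) // IsFullCycle π ∧ descSet π ⊆ I}

/-- `β_n(I)`: number of permutations of `[n]` with descent set exactly `I`. -/
noncomputable def betaP (n : ℕ) (I : Finset ℕ) : ℕ :=
  Nat.card {π : Equiv.Perm (Fin n) // descSet π = I}

/-- `β^cyc_n(I)`: number of `n`-cycles with descent set exactly `I`. -/
noncomputable def betaC (n : ℕ) (I : Finset ℕ) : ℕ :=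
  Nat.card {π : Equiv.Perm (Fin n) // IsFullCycle π ∧ descSet π = I}

/-- `I/d = {i/d : i ∈ I, d ∣ i}`. -/
def divSet (I : Finset ℕ) (d : ℕ) : Finset ℕ :=
  (I.filter fun i => d ∣ i).image (· / d)

/-! ### Descents and blocks -/

/-- Zero-based position `x` lies in block number `blk J x` when `ℕ` is cut into intervals after the
(one-based) positions in `J`. -/
def blk (J : Finset ℕ) (x : ℕ) : ℕ := (J.filter (· ≤ x)).card

lemma blk_mono (J : Finset ℕ) : Monotone (blk J) := fun _ _ h =>
  card_le_card fun k hk => by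
    simp only [mem_filter] at hk ⊢
    exact ⟨hk.1, hk.2.trans h⟩

lemma blk_succ_eq_iff (J : Finset ℕ) (x : ℕ) : blk J x = blk J (x + 1) ↔ x + 1 ∉ J := by
  constructor
  · intro h hx
    have : blk J x < blk J (x + 1) := by
      apply card_lt_card
      rw [ssubset_iff_of_subset]
      · exact ⟨x + 1, by simp [hx], by simp⟩
      · intro k hk
        simp only [mem_filter] at hk ⊢
        exact ⟨hk.1, by omega⟩
    omega
  · intro h
    unfold blk
    congr 1
    ext k
    simp only [mem_filter, and_congr_right_iff]
    intro hk
    have : k ≠ x + 1 := fun e => h (e ▸ hk)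
    omega

/-- A permutation has its descents in `J` iff it is increasing on each block cut out by `J`. -/
lemma descSet_subset_iff {n : ℕ} (π : Equiv.Perm (Fin n)) (J : Finset ℕ) :
    descSet π ⊆ J ↔ ∀ x y : Fin n, x < y → blk J x = blk J y → π x < π y := by
  constructor
  · intro h
    have step : ∀ (x : ℕ) (hx : x + 1 < n), blk J x = blk J (x + 1) →
        π ⟨x, by omega⟩ < π ⟨x + 1, hx⟩ := by
      intro x hx hb
      rw [blk_succ_eq_iff] at hb
      by_contra hlt
      apply hb
      apply h
      have hne : π ⟨x, by omega⟩ ≠ π ⟨x + 1, hx⟩ := fun e => by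
        have := π.injective e
        simp at this
      have hlt' := lt_of_le_of_ne (not_lt.1 hlt) hne.symm
      have hx' : x < n := by omega
      simpa [descSet, permVal, hx, hx'] using hlt'
    have main : ∀ (d x : ℕ) (hx : x + d + 1 < n), blk J x = blk J (x + d + 1) →
        π ⟨x, by omega⟩ < π ⟨x + d + 1, hx⟩ := by
      intro d
      induction d with
      | zero => exact fun x hx hb => step x hx hb
      | succ d ih =>
        intro x hx hb
        have h1 : blk J x ≤ blk J (x + d + 1) := blk_mono J (by omega)
        have h2 : blk J (x + d + 1) ≤ blk J (x + (d + 1) + 1) := blk_mono J (by omega)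
        exact (ih x (by omega) (by omega)).trans (step (x + d + 1) hx (by
          have e : x + (d + 1) + 1 = x + d + 1 + 1 := by omega
          rw [e] at hb h2
          omega))
    rintro ⟨x, hx⟩ ⟨y, hy⟩ hxy hb
    rw [Fin.mk_lt_mk] at hxy
    obtain ⟨d, rfl⟩ := Nat.exists_eq_add_of_lt hxy
    exact main d x hy hb
  · intro h i hi
    simp only [descSet, mem_filter, mem_Ioo] at hi
    obtain ⟨⟨hi0, hin⟩, hd⟩ := hi
    obtain ⟨x, rfl⟩ := Nat.exists_eq_add_of_lt hi0
    simp only [zero_add] at *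
    by_contra hJ
    have hx : x < n := by omega
    have := h ⟨x, hx⟩ ⟨x + 1, hin⟩ (by simp [Fin.mk_lt_mk]) ((blk_succ_eq_iff J x).2 hJ)
    simp [permVal, hin, hx] at hd
    exact absurd hd (not_lt.2 this.le)

/-! ### Ranking the positions of a word -/

/-- A permutation of `Fin m` is determined by the relative order of its values. -/
lemma perm_eq_of_order {m : ℕ} (r s : Equiv.Perm (Fin m))
    (h : ∀ i j, r i < r j → s i < s j) : s = r := by
  have h1 : Monotone (id ∘ (s * r⁻¹ : Equiv.Perm (Fin m))) := by
    apply StrictMono.monotone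
    intro x y hxy
    exact h _ _ (by simpa using hxy)
  have h2 : Monotone (id ∘ (1 : Equiv.Perm (Fin m))) := fun x y hxy => hxy
  have := Tuple.unique_monotone h1 h2
  ext i
  have := congrFun this (r i)
  simp at this
  rw [this]

/-- Let `b` be weakly increasing, and let `K f` be an injective key on positions that refines the
word `f`. Each rearrangement `f` of `b` is `b ∘ τ` for exactly one permutation `τ` that ranks the
positions by `K f`; so the number of such `τ` is the number of rearrangements of `b`, whatever the
choice of the key. -/
lemma card_ranking {m : ℕ} {α : Type*} [LinearOrder α] (b : Fin m → ℕ) (hb : Monotone b)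
    (K : (Fin m → ℕ) → Fin m → α) (hK : ∀ f, Function.Injective (K f))
    (hKf : ∀ f i j, f i < f j → K f i < K f j) :
    Nat.card {τ : Equiv.Perm (Fin m) // ∀ i j, K (b ∘ τ) i < K (b ∘ τ) j → τ i < τ j} =
      Nat.card (Set.range fun τ : Equiv.Perm (Fin m) => b ∘ τ) := by
  apply Nat.card_congr
  refine Equiv.ofBijective (fun τ => ⟨b ∘ τ.1, τ.1, rfl⟩) ⟨?_, ?_⟩
  · rintro ⟨r, hr⟩ ⟨s, hs⟩ h
    replace h : b ∘ r = b ∘ s := congrArg Subtype.val h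
    rw [Subtype.mk.injEq]
    refine (perm_eq_of_order r s fun i j hij => hs i j ?_).symm
    rw [← h]
    by_contra hlt
    rcases lt_or_eq_of_le (not_lt.1 hlt) with h1 | h1
    · exact absurd (hr _ _ h1) (not_lt.2 hij.le)
    · exact absurd hij (by rw [hK _ h1]; exact lt_irrefl _)
  · rintro ⟨f, τ₀, hτ₀⟩
    simp only at hτ₀
    set r : Equiv.Perm (Fin m) := (Tuple.sort (K f))⁻¹ with hr
    have hmono : StrictMono (K f ∘ Tuple.sort (K f)) :=
      (Tuple.monotone_sort (K f)).strictMono_of_injective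
        ((hK f).comp (Tuple.sort (K f)).injective)
    have hrK : ∀ i j, K f i < K f j → r i < r j := by
      intro i j hij
      rw [← hmono.lt_iff_lt]
      simpa [hr] using hij
    have h1 : Monotone (b ∘ (τ₀ * r⁻¹ : Equiv.Perm (Fin m))) := by
      intro x y hxy
      by_contra hlt
      have : f (r⁻¹ y) < f (r⁻¹ x) := by
        rw [← hτ₀]
        simpa using hlt
      have := hrK _ _ (hKf f _ _ this)
      exact absurd (by simpa using this) (not_lt.2 hxy)
    have h2 : Monotone (b ∘ (1 : Equiv.Perm (Fin m))) := fun x y hxy => hb hxy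
    have hbr : b ∘ r = f := by
      rw [← hτ₀]
      funext i
      have := congrFun (Tuple.unique_monotone h1 h2) (r i)
      simpa using this.symm
    refine ⟨⟨r, ?_⟩, ?_⟩
    · rw [hbr]
      exact hrK
    · exact Subtype.ext hbr

/-- The key `(f i, i)`, i.e. stable sorting, counts permutations with descents in `I` through their
inverses: `σ` is increasing on blocks iff `σ⁻¹` ranks the positions by this key. -/
lemma alphaP_eq_range (m : ℕ) (I : Finset ℕ) :
    alphaP m I = Nat.card (Set.range fun τ : Equiv.Perm (Fin m) =>
      (fun x : Fin m => blk I x) ∘ τ) := by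
  have hb : Monotone (fun x : Fin m => blk I x) := fun x y h => blk_mono I h
  rw [← card_ranking _ hb (fun f i => toLex (f i, i))
    (fun f i j h => by simpa using (Prod.ext_iff.1 (toLex.injective h)).2)
    (fun f i j h => Prod.Lex.toLex_lt_toLex.2 (Or.inl h))]
  apply Nat.card_congr
  refine (Equiv.inv (Equiv.Perm (Fin m))).subtypeEquiv fun σ => ?_
  rw [descSet_subset_iff]
  simp only [Equiv.inv_apply, Prod.Lex.toLex_lt_toLex, Function.comp_apply]
  constructor
  · rintro h i j (h1 | ⟨h1, h2⟩)
    · by_contra hlt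
      exact absurd (hb (not_lt.1 hlt)) (not_le.2 h1)
    · by_contra hlt
      rcases lt_or_eq_of_le (not_lt.1 hlt) with h3 | h3
      · have := h _ _ h3 h1.symm
        exact absurd (by simpa using this) (not_lt.2 h2.le)
      · exact absurd h2 (by rw [σ⁻¹.injective h3]; exact lt_irrefl _)
  · intro h x y hxy hbl
    by_contra hlt
    rcases lt_or_eq_of_le (not_lt.1 hlt) with h3 | h3
    · have := h (σ y) (σ x) (Or.inr ⟨by simpa using hbl.symm, h3⟩)
      exact absurd (by simpa using this) (not_lt.2 hxy.le)
    · exact absurd hxy (by rw [σ.injective h3]; exact lt_irrefl _)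

/-! ### The suffix order -/

/-- The word `f` continued by the infinite letter `⊤`. -/
def extWord {m : ℕ} (f : Fin m → ℕ) (k : ℕ) : WithTop ℕ :=
  if h : k < m then ((f ⟨k, h⟩ : ℕ) : WithTop ℕ) else ⊤

/-- The suffix of the continued word that starts at position `k`, compared lexicographically. -/
def suffixKey {m : ℕ} (f : Fin m → ℕ) (k : ℕ) : Lex (ℕ → WithTop ℕ) :=
  toLex fun l => extWord f (k + l)

/-- The values of `τ` continued by `m`. -/
def extPerm {m : ℕ} (τ : Equiv.Perm (Fin m)) (k : ℕ) : ℕ :=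
  if h : k < m then (τ ⟨k, h⟩ : ℕ) else m

lemma extPerm_le {m : ℕ} (τ : Equiv.Perm (Fin m)) (k : ℕ) : extPerm τ k ≤ m := by
  unfold extPerm
  split_ifs
  · exact (τ _).2.le
  · exact le_rfl

lemma suffixKey_lt_iff {m : ℕ} (f : Fin m → ℕ) (i j : ℕ) :
    suffixKey f i < suffixKey f j ↔
      ∃ k, (∀ l < k, extWord f (i + l) = extWord f (j + l)) ∧
        extWord f (i + k) < extWord f (j + k) := Iff.rfl

lemma suffixKey_lt_of_lt {m : ℕ} (f : Fin m → ℕ) (i j : ℕ) (h : extWord f i < extWord f j) :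
    suffixKey f i < suffixKey f j :=
  (suffixKey_lt_iff f i j).2 ⟨0, by simp, by simpa using h⟩

lemma suffixKey_injective {m : ℕ} (f : Fin m → ℕ) :
    Function.Injective fun i : Fin m => suffixKey f i := by
  have key : ∀ i j : Fin m, i < j → suffixKey f i ≠ suffixKey f j := by
    intro i j hij h
    -- at offset `m - j` the later suffix has reached `⊤` and the earlier one has not
    have := congrFun (toLex.injective h) (m - j)
    have h1 : (i : ℕ) + (m - j) < m := by
      have : (i : ℕ) < j := hij
      omega
    simp [extWord, h1] at this
  intro i j h
  rcases lt_trichotomy i j with h1 | h1 | h1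
  · exact absurd h (key i j h1)
  · exact h1
  · exact absurd h.symm (key j i h1)

/-- For `τ` listing a cycle from the successor of its largest element, ranking the positions by
the suffix order of the block word amounts to one local condition: within a block, larger values
have larger successors along the cycle. -/
lemma ranks_suffix_iff {m : ℕ} (b : Fin m → ℕ) (hb : Monotone b) (τ : Equiv.Perm (Fin m)) :
    (∀ i j : Fin m, suffixKey (b ∘ τ) i < suffixKey (b ∘ τ) j → τ i < τ j) ↔
      ∀ i j : Fin m, τ i < τ j → b (τ i) = b (τ j) →
        extPerm τ (i + 1) < extPerm τ (j + 1) := by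
  constructor
  · intro h i j hij hbij
    have hK : suffixKey (b ∘ τ) i < suffixKey (b ∘ τ) j := by
      by_contra hlt
      rcases lt_or_eq_of_le (not_lt.1 hlt) with h1 | h1
      · exact absurd (h _ _ h1) (not_lt.2 hij.le)
      · exact absurd hij (by rw [suffixKey_injective _ h1]; exact lt_irrefl _)
    have hK' : suffixKey (b ∘ τ) (i + 1) < suffixKey (b ∘ τ) (j + 1) := by
      obtain ⟨k, hk, hlt⟩ := (suffixKey_lt_iff _ _ _).1 hK
      cases k with
      | zero => simp [extWord, hbij] at hlt
      | succ k =>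
        refine (suffixKey_lt_iff _ _ _).2 ⟨k, fun l hl => ?_, ?_⟩
        · have := hk (l + 1) (by omega)
          rwa [show (i : ℕ) + 1 + l = i + (l + 1) by omega,
            show (j : ℕ) + 1 + l = j + (l + 1) by omega]
        · rwa [show (i : ℕ) + 1 + k = i + (k + 1) by omega,
            show (j : ℕ) + 1 + k = j + (k + 1) by omega]
    by_cases hi : (i : ℕ) + 1 < m
    · by_cases hj : (j : ℕ) + 1 < m
      · have := h ⟨i + 1, hi⟩ ⟨j + 1, hj⟩ hK'
        simpa [extPerm, hi, hj] using this
      · simp [extPerm, hi, hj]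
    · obtain ⟨k, -, hlt⟩ := (suffixKey_lt_iff _ _ _).1 hK'
      have : ¬ ((i : ℕ) + 1 + k < m) := by omega
      simp [extWord, this] at hlt
  · intro h
    -- induction on the length `k` of the common prefix, stepping back one place along the cycle
    have main : ∀ k i j : ℕ, (∀ l < k, extWord (b ∘ τ) (i + l) = extWord (b ∘ τ) (j + l)) →
        extWord (b ∘ τ) (i + k) < extWord (b ∘ τ) (j + k) → extPerm τ i < extPerm τ j := by
      intro k
      induction k with
      | zero =>
        intro i j _ hlt
        by_cases hi : i < m
        · by_cases hj : j < m
          · simp [extWord, hi, hj] at hlt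
            simp only [extPerm, hi, hj, dif_pos]
            by_contra hle
            exact absurd (hb (Fin.le_def.2 (not_lt.1 hle))) (not_le.2 hlt)
          · simp [extPerm, hi, hj]
        · simp [extWord, hi] at hlt
      | succ k ih =>
        intro i j heq hlt
        have hs : extPerm τ (i + 1) < extPerm τ (j + 1) := by
          apply ih
          · intro l hl
            have := heq (l + 1) (by omega)
            rwa [show i + 1 + l = i + (l + 1) by omega, show j + 1 + l = j + (l + 1) by omega]
          · rwa [show i + 1 + k = i + (k + 1) by omega, show j + 1 + k = j + (k + 1) by omega]
        have h0 := heq 0 (by omega)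
        by_cases hi : i < m
        · by_cases hj : j < m
          · simp [extWord, hi, hj] at h0
            simp only [extPerm, hi, hj, dif_pos]
            by_contra hle
            rcases lt_or_eq_of_le (not_lt.1 hle) with h1 | h1
            · exact absurd (h ⟨j, hj⟩ ⟨i, hi⟩ h1 h0.symm) (not_lt.2 hs.le)
            · have := τ.injective (Fin.ext h1)
              simp only [Fin.mk.injEq] at this
              subst this
              exact absurd hs (lt_irrefl _)
          · simp [extPerm, hi, hj]
        · have hi' : ¬ (i + 1 < m) := by omega
          have := extPerm_le τ (j + 1)
          simp only [extPerm, hi', dif_neg, not_false_iff] at hs this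
          omega
    intro i j hij
    obtain ⟨k, hk, hlt⟩ := (suffixKey_lt_iff _ _ _).1 hij
    simpa [extPerm] using main k i j hk hlt

/-! ### Cycles from orderings of the smaller elements -/

/-- `τ` extended to `Fin (m + 1)` by fixing the last element. -/
def fixLast {m : ℕ} (τ : Equiv.Perm (Fin m)) : Equiv.Perm (Fin (m + 1)) :=
  finSuccEquivLast.trans ((Equiv.optionCongr τ).trans finSuccEquivLast.symm)

lemma fixLast_castSucc {m : ℕ} (τ : Equiv.Perm (Fin m)) (i : Fin m) :
    fixLast τ i.castSucc = (τ i).castSucc := by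
  simp [fixLast]

lemma fixLast_last {m : ℕ} (τ : Equiv.Perm (Fin m)) :
    fixLast τ (Fin.last m) = Fin.last m := by
  simp [fixLast]

/-- The `(m + 1)`-cycle that sends the largest element to `τ 0`, and whose further elements are
`τ 1, τ 2, …` in cyclic order. -/
def cycleOfList {m : ℕ} (τ : Equiv.Perm (Fin m)) : Equiv.Perm (Fin (m + 1)) :=
  fixLast τ * finRotate (m + 1) * (fixLast τ)⁻¹

section NatCast

open scoped Fin.CommRing Fin.NatCast

/-- Conjugation by `fixLast τ` turns the cycle into addition of `1` on `Fin (m + 1)`. -/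
lemma cycleOfList_pow {m : ℕ} (τ : Equiv.Perm (Fin m)) (k : ℕ) (x : Fin (m + 1)) :
    (cycleOfList τ ^ k) (fixLast τ x) = fixLast τ (x + (k : Fin (m + 1))) := by
  induction k with
  | zero => simp
  | succ k ih =>
    rw [pow_succ', Equiv.Perm.mul_apply, ih]
    simp [cycleOfList, add_assoc]

lemma isFullCycle_cycleOfList {m : ℕ} (τ : Equiv.Perm (Fin m)) : IsFullCycle (cycleOfList τ) := by
  intro x y
  obtain ⟨x, rfl⟩ := (fixLast τ).surjective x
  obtain ⟨y, rfl⟩ := (fixLast τ).surjective y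
  refine ⟨(y - x).val, ?_⟩
  rw [cycleOfList_pow]
  simp

lemma cycleOfList_injective {m : ℕ} : Function.Injective (cycleOfList (m := m)) := by
  intro τ τ' h
  ext i
  have h1 := cycleOfList_pow τ (i + 1) (Fin.last m)
  have h2 := cycleOfList_pow τ' (i + 1) (Fin.last m)
  have hi : Fin.last m + ((i + 1 : ℕ) : Fin (m + 1)) = i.castSucc := by
    rw [Nat.cast_add, add_comm ((i : ℕ) : Fin (m + 1)), ← add_assoc]
    simp
  rw [hi, fixLast_last, fixLast_castSucc] at h1 h2
  rw [h, h2] at h1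
  simpa using (congrArg Fin.val h1).symm

lemma cycleOfList_surjective {m : ℕ} (π : Equiv.Perm (Fin (m + 1))) (hπ : IsFullCycle π) :
    ∃ τ, cycleOfList τ = π := by
  have hc : π.IsCycleOn (univ : Finset (Fin (m + 1))) := by
    refine ⟨by simp, fun x _ y _ => ?_⟩
    obtain ⟨k, hk⟩ := hπ x y
    exact ⟨k, by simpa using hk⟩
  have hlast : (π ^ (m + 1)) (Fin.last m) = Fin.last m := by
    simpa using hc.pow_card_apply (mem_univ (Fin.last m))
  -- `t` lists the orbit of the largest element, which returns to itself after `m + 1` steps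
  let t : Fin (m + 1) → Fin (m + 1) := fun k => (π ^ (k.val + 1)) (Fin.last m)
  have ht : Function.Bijective t := by
    rw [← Finite.surjective_iff_bijective]
    intro y
    obtain ⟨k, hk, hy⟩ := hc.exists_pow_eq (mem_univ (π (Fin.last m))) (mem_univ y)
    refine ⟨⟨k, by simpa using hk⟩, ?_⟩
    simpa [t, pow_succ] using hy
  have htl : t (Fin.last m) = Fin.last m := hlast
  have hne : ∀ i : Fin m, t i.castSucc ≠ Fin.last m := fun i h => by
    have := ht.1 (h.trans htl.symm)
    exact absurd this (Fin.castSucc_lt_last i).ne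
  let τf : Fin m → Fin m := fun i => (t i.castSucc).castPred (hne i)
  have hτ : Function.Bijective τf := by
    rw [← Finite.injective_iff_bijective]
    intro i j h
    have h' : t i.castSucc = t j.castSucc := by simpa [τf] using h
    exact Fin.castSucc_injective _ (ht.1 h')
  let τ : Equiv.Perm (Fin m) := Equiv.ofBijective τf hτ
  have hft : ∀ x, fixLast τ x = t x := by
    intro x
    induction x using Fin.lastCases with
    | last => rw [fixLast_last, htl]
    | cast i => rw [fixLast_castSucc]; simp [τ, τf]
  refine ⟨τ, ?_⟩
  ext x
  obtain ⟨k, rfl⟩ := (fixLast τ).surjective x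
  have h1 := cycleOfList_pow τ 1 k
  simp only [pow_one, Nat.cast_one] at h1
  rw [h1, hft, hft]
  congr 1
  induction k using Fin.lastCases with
  | last => simp [t, hlast]
  | cast i =>
    rw [Fin.coeSucc_eq_succ]
    simp [t, pow_succ']

lemma cycleOfList_castSucc {m : ℕ} (τ : Equiv.Perm (Fin m)) (i : Fin m) :
    (cycleOfList τ (τ i).castSucc : ℕ) = extPerm τ (i + 1) := by
  have h1 := cycleOfList_pow τ 1 i.castSucc
  simp only [pow_one, Nat.cast_one] at h1
  rw [fixLast_castSucc] at h1
  rw [h1, Fin.coeSucc_eq_succ]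
  by_cases hi : (i : ℕ) + 1 < m
  · have : i.succ = (⟨i + 1, hi⟩ : Fin m).castSucc := rfl
    rw [this, fixLast_castSucc]
    simp [extPerm, hi]
  · have : i.succ = Fin.last m := Fin.ext (by simp; omega)
    rw [this, fixLast_last]
    simp [extPerm, hi]

end NatCast

lemma blk_insert_of_lt {m : ℕ} (I : Finset ℕ) {x : ℕ} (hx : x < m) :
    blk (insert m I) x = blk I x := by
  unfold blk
  rw [filter_insert, if_neg (by omega)]

lemma blk_insert_lt {m : ℕ} (I : Finset ℕ) {x : ℕ} (hx : x < m) :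
    blk (insert m I) x < blk (insert m I) m := by
  apply card_lt_card
  rw [ssubset_iff_of_subset]
  · exact ⟨m, by simp, by simp; omega⟩
  · intro k hk
    simp only [mem_filter] at hk ⊢
    exact ⟨hk.1, by omega⟩

/-- Position `m` (zero-based) forms a block of its own, since `m` may be a descent; hence only the
positions below `m`, all of the form `τ i`, are compared. -/
lemma descSet_cycleOfList_subset_iff {m : ℕ} (I : Finset ℕ) (τ : Equiv.Perm (Fin m)) :
    descSet (cycleOfList τ) ⊆ insert m I ↔
      ∀ i j : Fin m, τ i < τ j → blk I (τ i) = blk I (τ j) →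
        extPerm τ (i + 1) < extPerm τ (j + 1) := by
  rw [descSet_subset_iff]
  constructor
  · intro h i j hij hb
    have := h (τ i).castSucc (τ j).castSucc (Fin.castSucc_lt_castSucc_iff.2 hij) (by
      simpa [blk_insert_of_lt] using hb)
    rwa [Fin.lt_def, cycleOfList_castSucc, cycleOfList_castSucc] at this
  · intro h x y hxy hb
    induction y using Fin.lastCases with
    | last => exact absurd hb (blk_insert_lt I hxy).ne
    | cast y =>
      induction x using Fin.lastCases with
      | last => exact absurd hxy (not_lt.2 (Fin.le_last _))
      | cast x =>
        obtain ⟨i, rfl⟩ := τ.surjective x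
        obtain ⟨j, rfl⟩ := τ.surjective y
        rw [Fin.lt_def, cycleOfList_castSucc, cycleOfList_castSucc]
        exact h i j (Fin.castSucc_lt_castSucc_iff.1 hxy) (by
          simpa [blk_insert_of_lt] using hb)

/-- Cycles of length `m + 1` whose descents other than `m` lie in `I` are equinumerous with
permutations of `[m]` whose descents lie in `I`: both are counted by the rearrangements of the
block word of `I`. -/
lemma card_cycles_eq_alphaP (m : ℕ) (I : Finset ℕ) :
    alphaC (m + 1) (insert m I) = alphaP m I := by
  have hb : Monotone (fun x : Fin m => blk I x) := fun x y h => blk_mono I h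
  rw [alphaP_eq_range, ← card_ranking _ hb (fun f (i : Fin m) => suffixKey f i)
    (fun f => suffixKey_injective f)
    (fun f i j h => suffixKey_lt_of_lt f i j (by simpa [extWord] using h))]
  symm
  apply Nat.card_congr
  refine Equiv.ofBijective (fun τ => ⟨cycleOfList τ.1, isFullCycle_cycleOfList τ.1,
    (descSet_cycleOfList_subset_iff I τ.1).2 ((ranks_suffix_iff _ hb τ.1).1 τ.2)⟩) ⟨?_, ?_⟩
  · intro τ τ' h
    exact Subtype.ext (cycleOfList_injective (congrArg Subtype.val h))
  · rintro ⟨π, hπ, hd⟩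
    obtain ⟨τ, rfl⟩ := cycleOfList_surjective π hπ
    exact ⟨⟨τ, (ranks_suffix_iff _ hb τ).2 ((descSet_cycleOfList_subset_iff I τ).1 hd)⟩, rfl⟩

/-! ### From descent sets contained in `I` to descent sets equal to `I` -/

/-- Splitting the values of `g` below `I` into the value `I` and the proper subsets of `I`. -/
lemma card_subset_expand {Z : Type*} [Fintype Z] (g : Z → Finset ℕ) (I : Finset ℕ) :
    (univ.filter fun z => g z ⊆ I).card =
      (univ.filter fun z => g z = I).card +
        ∑ J ∈ I.ssubsets, (univ.filter fun z => g z = J).card := by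
  rw [card_eq_sum_card_fiberwise (f := g) (t := I.powerset) (fun z hz => by simpa using hz)]
  rw [← Finset.insert_erase (mem_powerset_self I), sum_insert (by simp)]
  have : ∀ J ⊆ I, (univ.filter fun z => g z ⊆ I).filter (fun z => g z = J) =
      univ.filter fun z => g z = J := by
    intro J hJ
    ext z
    simp only [mem_filter, mem_univ, true_and, and_iff_right_iff_imp]
    rintro rfl
    exact hJ
  rw [this I subset_rfl]
  congr 1
  refine sum_congr rfl fun J hJ => ?_
  rw [this J (mem_powerset.1 (mem_of_mem_erase hJ))]

/-- Möbius inversion on a Boolean lattice, in counting form: if two set-valued statistics have the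
same number of values below each `I ⊆ S`, they take each value `I ⊆ S` equally often. -/
lemma card_eq_of_card_subset {X Y : Type*} [Fintype X] [Fintype Y] (d : X → Finset ℕ)
    (e : Y → Finset ℕ) (S : Finset ℕ)
    (h : ∀ I ⊆ S, (univ.filter fun x => d x ⊆ I).card = (univ.filter fun y => e y ⊆ I).card)
    (I : Finset ℕ) (hI : I ⊆ S) :
    (univ.filter fun x => d x = I).card = (univ.filter fun y => e y = I).card := by
  induction I using Finset.strongInduction with
  | H I ih =>
    have h1 := h I hI
    rw [card_subset_expand d I, card_subset_expand e I] at h1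
    have h2 : ∑ J ∈ I.ssubsets, (univ.filter fun z => d z = J).card =
        ∑ J ∈ I.ssubsets, (univ.filter fun z => e z = J).card :=
      sum_congr rfl fun J hJ =>
        ih J (mem_ssubsets.1 hJ) ((mem_ssubsets.1 hJ).subset.trans hI)
    omega

lemma descSet_subset_Ioo {n : ℕ} (π : Equiv.Perm (Fin n)) : descSet π ⊆ Ioo 0 n :=
  filter_subset _ _

lemma card_subset_restrict (m : ℕ) (I : Finset ℕ) :
    Nat.card {π : Equiv.Perm (Fin (m + 1)) // IsFullCycle π ∧ descSet π ∩ Ioo 0 m ⊆ I} =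
      alphaC (m + 1) (insert m I) := by
  apply Nat.card_congr
  refine Equiv.subtypeEquivRight fun π => and_congr_right fun _ => ?_
  have hπ := descSet_subset_Ioo π
  constructor
  · intro h i hi
    have := mem_Ioo.1 (hπ hi)
    by_cases him : i = m
    · simp [him]
    · exact mem_insert_of_mem (h (mem_inter.2 ⟨hi, mem_Ioo.2 (by omega)⟩))
  · intro h i hi
    rw [mem_inter, mem_Ioo] at hi
    rcases mem_insert.1 (h hi.1) with h1 | h1
    · omega
    · exact h1

lemma card_restrict_eq (m : ℕ) (I : Finset ℕ) (hI : I ⊆ Ioo 0 m) :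
    Nat.card {π : Equiv.Perm (Fin (m + 1)) // IsFullCycle π ∧ descSet π ∩ Ioo 0 m = I} =
      betaP m I := by
  classical
  have key := card_eq_of_card_subset
    (X := {π : Equiv.Perm (Fin (m + 1)) // IsFullCycle π}) (Y := Equiv.Perm (Fin m))
    (fun π => descSet π.1 ∩ Ioo 0 m) descSet (Ioo 0 m) (fun J _ => by
      have h := (card_subset_restrict m J).trans (card_cycles_eq_alphaP m J)
      rw [alphaP, ← Nat.card_congr (Equiv.subtypeSubtypeEquivSubtypeInter _ _),
        Nat.card_eq_fintype_card, Nat.card_eq_fintype_card, Fintype.card_subtype,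
        Fintype.card_subtype] at h
      exact h) I hI
  rw [betaP, ← Nat.card_congr (Equiv.subtypeSubtypeEquivSubtypeInter _ _),
    Nat.card_eq_fintype_card, Nat.card_eq_fintype_card, Fintype.card_subtype,
    Fintype.card_subtype]
  exact key

/-- The cycles whose descents below `m` are `I` split according to whether `m` is a descent. -/
lemma betaC_add_betaC (m : ℕ) (hm : 0 < m) (I : Finset ℕ) (hI : I ⊆ Ioo 0 m) :
    betaC (m + 1) I + betaC (m + 1) (insert m I) =
      Nat.card {π : Equiv.Perm (Fin (m + 1)) //
        IsFullCycle π ∧ descSet π ∩ Ioo 0 m = I} := by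
  classical
  have hmI : m ∉ I := fun h => by simpa using hI h
  have hS : Ioo 0 (m + 1) = insert m (Ioo 0 m) := by
    ext i
    simp only [mem_Ioo, mem_insert]
    omega
  simp only [betaC, Nat.card_eq_fintype_card, Fintype.card_subtype]
  rw [← card_union_of_disjoint]
  · congr 1
    ext π
    have hπ := descSet_subset_Ioo π
    simp only [mem_union, mem_filter, mem_univ, true_and, ← and_or_left]
    refine and_congr_right fun _ => ?_
    constructor
    · rintro (h | h)
      · rw [h, inter_eq_left.2 hI]
      · rw [h, insert_inter_of_notMem (by simp), inter_eq_left.2 hI]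
    · intro h
      rw [hS] at hπ
      by_cases hmD : m ∈ descSet π
      · right
        rw [← h]
        ext i
        have := @hπ i
        simp only [mem_insert, mem_inter] at this ⊢
        constructor
        · intro hi
          have := this hi
          tauto
        · rintro (rfl | hi)
          · exact hmD
          · exact hi.1
      · left
        rw [← h, eq_comm, inter_eq_left]
        exact (subset_insert_iff_of_notMem hmD).1 hπ
  · rw [disjoint_left]
    intro π h1 h2
    simp only [mem_filter, mem_univ, true_and] at h1 h2
    exact hmI (h1.2 ▸ h2.2 ▸ mem_insert_self m I)

/-- For `I ⊆ [n-2]`, the number of `n`-cycles `π` with `D(π) ∩ [n-2] = I` equals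
`β_{n-1}(I)`; equivalently, `β^cyc_n(I) + β^cyc_n(I ∪ {n-1}) = β_{n-1}(I)`. -/
theorem betaC_restriction (n : ℕ) (hn : 2 ≤ n) (I : Finset ℕ)
    (hI : I ⊆ Finset.Ioo 0 (n - 1)) :
    Nat.card {π : Equiv.Perm (Fin n) //
        IsFullCycle π ∧ descSet π ∩ Finset.Ioo 0 (n - 1) = I} = betaP (n - 1) I ∧
      betaC n I + betaC n (insert (n - 1) I) = betaP (n - 1) I := by
  obtain ⟨m, rfl⟩ : ∃ m, n = m + 1 := ⟨n - 1, by omega⟩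
  simp only [Nat.add_sub_cancel] at hI ⊢
  have h := card_restrict_eq m I hI
  exact ⟨h, (betaC_add_betaC m (by omega) I hI).trans h⟩
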